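/- Let K be a b-bounded b-convex body in a Minkowski space and let S ⊆ K. Then bh₁(S) = K if and only if every exposed b-face of K meets cl(S). -/

import Mathlib

open Metric Set

/-- The ball hull of `S`: intersection of all closed balls of radius 1 containing `S`. -/
def ballHull {E : Type*} [NormedAddCommGroup E] (S : Set E) : Set E :=
  ⋂ x ∈ {x : E | S ⊆ closedBall x 1}, closedBall x 1

/-- The circumradius of `S`: the least `r ≥ 0` such that `S` is contained in some
closed ball of radius `r`. -/
noncomputable def circumradius {E : Type*} [NormedAddCommGroup E] (S : Set E) : ℝ :=
  sInf {r : ℝ | 0 ≤ r ∧ ∃ x : E, S ⊆ closedBall x r}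

/-- A b-convex body: a bounded nonempty set equal to its ball hull. -/
def IsBConvexBody {E : Type*} [NormedAddCommGroup E] (K : Set E) : Prop :=
  Bornology.IsBounded K ∧ K.Nonempty ∧ ballHull K = K

/-- `F` is an exposed b-face of `K`: `F = K ∩ S(y,1)` for some supporting sphere `S(y,1)`. -/
def IsExposedBFace {E : Type*} [NormedAddCommGroup E] (K F : Set E) : Prop :=
  ∃ y : E, K ⊆ closedBall y 1 ∧ (K ∩ sphere y 1).Nonempty ∧ F = K ∩ sphere y 1

/-- The set of b-exposed points of `K`. -/
def bExp {E : Type*} [NormedAddCommGroup E] (K : Set E) : Set E :=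
  {x : E | ∃ y : E, K ⊆ closedBall y 1 ∧ K ∩ sphere y 1 = {x}}

/-! For a compact set `T`, the centres `y` with `T ⊆ ball y r` form an open set and those with
`T ⊆ closedBall y r` a closed set; a supporting sphere is one whose centre lies in the difference.

If `closure S` missed the face cut out by `sphere y 1`, then `closure S ⊆ ball y 1`, so every
centre near `y` would do for `S` as well. A point `p` of the ball hull is then within distance 1 of
a whole neighbourhood of `y`, hence at distance less than 1 from `y`, and the face is empty.

Conversely, let `K ⊆ ball c 1` and `S ⊆ closedBall x 1`, and suppose `K ⊄ closedBall x 1`. Moving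
the centre from `c` to `x`, connectedness of the segment gives a supporting sphere of `K` whose
centre `y` lies strictly between them. Any `s ∈ closure S` is at distance less than 1 from `c` and
at most 1 from `x`, so less than 1 from `y`, and the face at `y` misses `closure S`. -/

section Centers

variable {X : Type*} [PseudoMetricSpace X] {K T : Set X} {r : ℝ}

theorem isOpen_setOf_subset_ball (hK : IsCompact K) (r : ℝ) : IsOpen {y | K ⊆ ball y r} := by
  refine isOpen_iff_mem_nhds.2 fun y hy ↦ hK.eventually_forall_of_forall_eventually fun k hk ↦ ?_
  exact (isOpen_lt (continuous_snd.dist continuous_fst) continuous_const).mem_nhds (hy hk)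

theorem isClosed_setOf_subset_closedBall (K : Set X) (r : ℝ) :
    IsClosed {y | K ⊆ closedBall y r} := by
  have hinter : {y | K ⊆ closedBall y r} = ⋂ k ∈ K, closedBall k r := by
    ext y
    simp only [mem_ofPred_eq, subset_def, mem_iInter₂, mem_closedBall_comm]
  exact hinter ▸ isClosed_biInter fun _ _ ↦ isClosed_closedBall

theorem subset_ball_of_inter_sphere_eq_empty {y : X} (hK : K ⊆ closedBall y r)
    (h : K ∩ sphere y r = ∅) : K ⊆ ball y r := by
  rw [← closedBall_sdiff_sphere]
  exact subset_sdiff.2 ⟨hK, disjoint_iff_inter_eq_empty.2 h⟩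

theorem exists_supporting_sphere_of_isPreconnected (hT : IsPreconnected T) (hK : IsCompact K)
    {c x : X} (hc : c ∈ T) (hx : x ∈ T) (hKc : K ⊆ ball c r) (hKx : ¬K ⊆ closedBall x r) :
    ∃ y ∈ T, K ⊆ closedBall y r ∧ (K ∩ sphere y r).Nonempty := by
  by_contra! hT_avoids
  have hcover : T ⊆ {y | K ⊆ ball y r} ∪ {y | K ⊆ closedBall y r}ᶜ := fun y hy ↦
    or_iff_not_imp_right.2 fun hKy ↦
      subset_ball_of_inter_sphere_eq_empty (not_not.1 hKy) (hT_avoids y hy (not_not.1 hKy))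
  obtain ⟨y, -, hKy, hKy'⟩ := hT _ _ (isOpen_setOf_subset_ball hK r)
    (isClosed_setOf_subset_closedBall K r).isOpen_compl hcover ⟨c, hc, hKc⟩ ⟨x, hx, hKx⟩
  exact hKy' (Subset.trans hKy ball_subset_closedBall)

end Centers

section Segment

variable {E : Type*} [SeminormedAddCommGroup E] [NormedSpace ℝ E] {r : ℝ} {c x : E}

theorem openSegment_subset_ball {s : E} (hc : c ∈ ball s r) (hx : x ∈ closedBall s r) :
    openSegment ℝ c x ⊆ ball s r := by
  have hr : r ≠ 0 := (pos_of_mem_ball hc).ne'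
  rw [← interior_closedBall s hr] at hc ⊢
  exact (convex_closedBall s r).openSegment_interior_self_subset_interior hc hx

theorem exists_supporting_sphere_mem_openSegment {K : Set E} (hK : IsCompact K)
    (hKc : K ⊆ ball c r) (hKx : ¬K ⊆ closedBall x r) :
    ∃ y ∈ openSegment ℝ c x, K ⊆ closedBall y r ∧ (K ∩ sphere y r).Nonempty := by
  obtain ⟨y, hy, hKy, k, hk, hky⟩ :=
    exists_supporting_sphere_of_isPreconnected (convex_segment c x).isPreconnected hK
      (left_mem_segment ℝ c x) (right_mem_segment ℝ c x) hKc hKx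
  have hcy : c ≠ y := by
    rintro rfl
    exact (mem_ball.1 (hKc hk)).ne hky
  have hxy : x ≠ y := by
    rintro rfl
    exact hKx hKy
  exact ⟨y, mem_openSegment_of_ne_left_right hcy hxy hy, hKy, k, hk, hky⟩

end Segment

section BallHull

variable {E : Type*} [NormedAddCommGroup E] {S T K : Set E} {x : E}

theorem ballHull_subset_closedBall (h : S ⊆ closedBall x 1) : ballHull S ⊆ closedBall x 1 :=
  biInter_subset_of_mem h

theorem subset_ballHull_iff : T ⊆ ballHull S ↔ ∀ x, S ⊆ closedBall x 1 → T ⊆ closedBall x 1 :=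
  subset_iInter₂_iff

theorem ballHull_mono (h : S ⊆ T) : ballHull S ⊆ ballHull T :=
  subset_ballHull_iff.2 fun _ hT ↦ ballHull_subset_closedBall (h.trans hT)

theorem isClosed_ballHull (S : Set E) : IsClosed (ballHull S) :=
  isClosed_biInter fun _ _ ↦ isClosed_closedBall

theorem closure_subset_ballHull (S : Set E) : closure S ⊆ ballHull S :=
  closure_minimal (subset_ballHull_iff.2 fun _ ↦ id) (isClosed_ballHull S)

theorem exists_subset_ball_of_circumradius_lt {r : ℝ} (hS : Bornology.IsBounded S)
    (h : circumradius S < r) : ∃ c, S ⊆ ball c r := by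
  have hradii : {r : ℝ | 0 ≤ r ∧ ∃ x : E, S ⊆ closedBall x r}.Nonempty := by
    obtain ⟨R, hR, hSR⟩ := hS.subset_closedBall_lt 0 0
    exact ⟨R, hR.le, 0, hSR⟩
  obtain ⟨ρ, ⟨-, c, hc⟩, hρ⟩ := exists_lt_of_csInf_lt hradii h
  exact ⟨c, hc.trans (closedBall_subset_ball hρ)⟩

theorem IsBConvexBody.isCompact [ProperSpace E] (hK : IsBConvexBody K) : IsCompact K := by
  obtain ⟨hKbdd, -, hKhull⟩ := hK
  have hKclosed : IsClosed K := hKhull ▸ isClosed_ballHull K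
  exact isCompact_of_isClosed_isBounded hKclosed hKbdd

variable [NormedSpace ℝ E]

theorem ballHull_subset_ball (hS : IsCompact S) (h : S ⊆ ball x 1) : ballHull S ⊆ ball x 1 := by
  intro p hp
  have hnear : {y | S ⊆ ball y 1} ⊆ closedBall p 1 := fun y hy ↦
    mem_closedBall_comm.1 (ballHull_subset_closedBall (hy.trans ball_subset_closedBall) hp)
  have hx : x ∈ interior (closedBall p 1) :=
    interior_maximal hnear (isOpen_setOf_subset_ball hS 1) h
  rwa [interior_closedBall p one_ne_zero, mem_ball_comm] at hx

theorem IsExposedBFace.inter_closure_nonempty {F : Set E} (hF : IsExposedBFace (ballHull S) F)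
    (hS : IsCompact (closure S)) : (F ∩ closure S).Nonempty := by
  obtain ⟨y, hy, ⟨p, hp, hpy⟩, rfl⟩ := hF
  have hSy : closure S ⊆ closedBall y 1 := (closure_subset_ballHull S).trans hy
  by_contra! hdisj
  have hSy' : closure S ⊆ ball y 1 := subset_ball_of_inter_sphere_eq_empty hSy <| by
    rwa [inter_right_comm, inter_eq_right.2 (closure_subset_ballHull S)] at hdisj
  exact (mem_ball.1 (ballHull_subset_ball hS hSy' (ballHull_mono subset_closure hp))).ne hpy

theorem subset_ballHull_of_forall_exposedBFace {c : E} (hK : IsCompact K) (hKc : K ⊆ ball c 1)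
    (hfaces : ∀ F, IsExposedBFace K F → (F ∩ closure S).Nonempty) : K ⊆ ballHull S := by
  refine subset_ballHull_iff.2 fun x hSx ↦ ?_
  by_contra hKx
  obtain ⟨y, hy, hKy, hface⟩ := exists_supporting_sphere_mem_openSegment hK hKc hKx
  obtain ⟨s, ⟨hsK, hsy⟩, hsS⟩ := hfaces _ ⟨y, hKy, hface, rfl⟩
  have hsc : c ∈ ball s 1 := mem_ball_comm.1 (hKc hsK)
  have hsx : x ∈ closedBall s 1 :=
    mem_closedBall_comm.1 (closure_minimal hSx isClosed_closedBall hsS)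
  exact (mem_ball'.1 (openSegment_subset_ball hsc hsx hy)).ne hsy

theorem stmt_15_general (hK : IsCompact K) (hKhull : ballHull K = K) (hKrad : circumradius K < 1)
    (hS : S ⊆ K) :
    ballHull S = K ↔ ∀ F, IsExposedBFace K F → (F ∩ closure S).Nonempty := by
  constructor
  · rintro rfl F hF
    exact hF.inter_closure_nonempty (hK.closure_of_subset hS)
  · intro hfaces
    obtain ⟨c, hKc⟩ := exists_subset_ball_of_circumradius_lt hK.isBounded hKrad
    have hSK : ballHull S ⊆ K := (ballHull_mono hS).trans hKhull.subset
    exact hSK.antisymm (subset_ballHull_of_forall_exposedBFace hK hKc hfaces)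

end BallHull

theorem stmt_15 {E : Type*} [NormedAddCommGroup E] [NormedSpace ℝ E]
    [FiniteDimensional ℝ E] [Nontrivial E]
    (K : Set E) (hK : IsBConvexBody K) (hbb : circumradius K < 1)
    (S : Set E) (hS : S ⊆ K) :
    ballHull S = K ↔ ∀ F : Set E, IsExposedBFace K F → (F ∩ closure S).Nonempty := by
  exact stmt_15_general hK.isCompact hK.2.2 hbb hS
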